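/- arXiv:1512.07382 — 2 statements merged into one kernel-verified Lean document; each statement's English description precedes it below -/
import Mathlib

section
/- A linear functional ψ : L^∞[1,∞) → ℝ is an extreme point of the convex set ℳ if and only if ψ = ψ^𝒰 for some ultrafilter 𝒰 on [1,∞) containing no bounded subset of [1,∞). That is, 𝓜̃ is exactly the set of extreme points of ℳ. -/
open Filter MeasureTheory

noncomputable section

/-- Lebesgue measure restricted to `[1,∞)`. -/
abbrev muIci : Measure ℝ := volume.restrict (Set.Ici (1:ℝ))

/-- `L^∞[1,∞)`. -/
abbrev Linf : Type := Lp ℝ ⊤ muIci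

/-- `𝒰` is an ultrafilter on `[1,∞)` containing no bounded subset of `[1,∞)`. -/
def UnbddUF (𝒰 : Ultrafilter ℝ) : Prop :=
  Set.Ici (1:ℝ) ∈ 𝒰 ∧ ∀ B ⊆ Set.Ici (1:ℝ), Bornology.IsBounded B → B ∉ 𝒰

/-- `M̄(f) = limsup_{x→∞} (1/x) ∫_1^x f(t) dt`. -/
def Mbar (f : Linf) : ℝ :=
  limsup (fun x : ℝ => (1 / x) * ∫ t in Set.Icc (1:ℝ) x, f t) atTop

/-- The class `ℳ` of linear functionals `ψ` on `L^∞[1,∞)` with `ψ(f) ≤ M̄(f)` for all `f`. -/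
def Mcl : Set (Linf →ₗ[ℝ] ℝ) := {ψ | ∀ f : Linf, ψ f ≤ Mbar f}

/-- The average. -/
def av (f : Linf) (x : ℝ) : ℝ := (1 / x) * ∫ t in Set.Icc (1:ℝ) x, f t

theorem exists_bd (f : Linf) : ∃ C : ℝ, 0 ≤ C ∧ ∀ᵐ t ∂muIci, ‖f t‖ ≤ C :=
  ⟨_, lpNorm_nonneg, ae_le_lpNorm_exponent_top (Lp.memLp f)⟩

theorem res_le (x : ℝ) : volume.restrict (Set.Icc (1:ℝ) x) ≤ muIci :=
  Measure.restrict_mono Set.Icc_subset_Ici_self le_rfl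

theorem ae_res {p : ℝ → Prop} (h : ∀ᵐ t ∂muIci, p t) (x : ℝ) :
    ∀ᵐ t ∂(volume.restrict (Set.Icc (1:ℝ) x)), p t :=
  (Measure.absolutelyContinuous_of_le (res_le x)).ae_le h

theorem int_on (f : Linf) (x : ℝ) : Integrable f (volume.restrict (Set.Icc (1:ℝ) x)) := by
  obtain ⟨C, -, hC⟩ := exists_bd f
  exact Integrable.of_bound ((Lp.aestronglyMeasurable f).mono_measure (res_le x)) C (ae_res hC x)

theorem av_bd (f : Linf) : ∃ C : ℝ, 0 ≤ C ∧ ∀ x, |av f x| ≤ C := by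
  obtain ⟨C, h0, hC⟩ := exists_bd f
  refine ⟨C, h0, fun x => ?_⟩
  unfold av
  rcases lt_or_ge x 1 with h | h
  · simp [Set.Icc_eq_empty (not_le.mpr h), h0]
  · have := norm_setIntegral_le_of_norm_le_const_ae (μ := volume) (s := Set.Icc 1 x) (f := f)
      (by simp) (ae_res hC x)
    rw [Real.norm_eq_abs] at this
    rw [Measure.real, Real.volume_Icc, ENNReal.toReal_ofReal (by linarith)] at this
    rw [abs_mul, abs_of_nonneg (by positivity), one_div, inv_mul_le_iff₀ (by linarith)]
    nlinarith

theorem av_add (f g : Linf) (x : ℝ) : av (f + g) x = av f x + av g x := by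
  unfold av
  rw [← mul_add, ← integral_add (int_on f x) (int_on g x)]
  congr 1
  exact integral_congr_ae (ae_res (Lp.coeFn_add f g) x)

theorem av_smul (c : ℝ) (f : Linf) (x : ℝ) : av (c • f) x = c * av f x := by
  unfold av
  rw [mul_left_comm, ← integral_const_mul c]
  congr 1
  exact integral_congr_ae (ae_res (Lp.coeFn_smul c f) x)

theorem av_neg (f : Linf) (x : ℝ) : av (-f) x = - av f x := by
  have := av_smul (-1) f x
  simpa using this

/-- The constant one. -/
def oneL : Linf := (memLp_top_const (1:ℝ)).toLp (fun _ => (1:ℝ))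

theorem av_one {x : ℝ} (hx : 1 ≤ x) : av oneL x = 1 - x⁻¹ := by
  unfold av
  have : ∫ t in Set.Icc (1:ℝ) x, oneL t = ∫ t in Set.Icc (1:ℝ) x, (1:ℝ) :=
    integral_congr_ae (ae_res (MemLp.coeFn_toLp _) x)
  rw [this]
  have hx' : x ≠ 0 := by positivity
  simp [Measure.real, Real.volume_Icc, hx]
  field_simp

theorem tendsto_one : Tendsto (av oneL) atTop (nhds 1) := by
  have h : Tendsto (fun x : ℝ => 1 - x⁻¹) atTop (nhds (1 - 0)) :=
    tendsto_const_nhds.sub tendsto_inv_atTop_zero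
  rw [sub_zero] at h
  refine h.congr' ?_
  filter_upwards [eventually_ge_atTop 1] with x hx
  exact (av_one hx).symm

theorem exists_abs (f : Linf) : ∃ g : Linf, ∀ x, 1 ≤ x → av g x = |av f x| := by
  obtain ⟨C, h0, hC⟩ := exists_bd f
  set f0 : ℝ → ℝ := Set.indicator (Set.Ici 1) f with hf0
  have hb : ∀ᵐ t ∂(volume : Measure ℝ), ‖f0 t‖ ≤ C := by
    rw [ae_restrict_iff' measurableSet_Ici] at hC
    filter_upwards [hC] with t ht
    by_cases h : t ∈ Set.Ici (1:ℝ)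
    · simpa [hf0, h] using ht h
    · simpa [hf0, h] using h0
  have hm : AEStronglyMeasurable f0 volume :=
    (aestronglyMeasurable_indicator_iff measurableSet_Ici).2 (Lp.aestronglyMeasurable f)
  have hint : ∀ a b : ℝ, IntervalIntegrable f0 volume a b := fun a b => by
    rw [intervalIntegrable_iff]
    have : IsFiniteMeasure (volume.restrict (Set.uIoc a b)) := ⟨by simp [Set.uIoc]⟩
    exact Integrable.of_bound hm.restrict C (ae_restrict_of_ae hb)
  set Φ : ℝ → ℝ := fun x => |∫ t in (1:ℝ)..x, f0 t| with hΦ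
  have hL : LipschitzWith C.toNNReal Φ := by
    refine LipschitzWith.of_dist_le_mul fun x y => ?_
    rw [Real.dist_eq, Real.dist_eq, Real.coe_toNNReal _ h0]
    refine (abs_abs_sub_abs_le _ _).trans ?_
    rw [intervalIntegral.integral_interval_sub_left (hint _ _) (hint _ _)]
    have := intervalIntegral.norm_integral_le_of_norm_le_const_ae (a := y) (b := x) (f := f0) (C := C)
      (hb.mono fun t ht _ => ht)
    simpa using this
  have hg : MemLp (deriv Φ) ⊤ muIci :=
    memLp_top_of_bound (measurable_deriv Φ).aestronglyMeasurable C
      (Eventually.of_forall fun x => by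
        have := norm_deriv_le_of_lipschitz (x₀ := x) hL
        rwa [Real.coe_toNNReal _ h0] at this)
  refine ⟨hg.toLp _, fun x hx => ?_⟩
  unfold av
  have e1 : ∫ t in Set.Icc (1:ℝ) x, hg.toLp _ t = ∫ t in Set.Icc (1:ℝ) x, deriv Φ t :=
    integral_congr_ae (ae_res (MemLp.coeFn_toLp _) x)
  have e2 : ∫ t in (1:ℝ)..x, deriv Φ t = Φ x - Φ 1 :=
    (hL.lipschitzOnWith (s := Set.uIcc 1 x)).absolutelyContinuousOnInterval.integral_deriv_eq_sub
  have e3 : ∫ t in Set.Icc (1:ℝ) x, f t = ∫ t in (1:ℝ)..x, f0 t := by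
    rw [intervalIntegral.integral_of_le hx, ← integral_Icc_eq_integral_Ioc]
    refine setIntegral_congr_fun measurableSet_Icc fun t ht => ?_
    simp [hf0, ht.1]
  rw [e1, integral_Icc_eq_integral_Ioc, ← intervalIntegral.integral_of_le hx, e2, e3, abs_mul,
    abs_of_nonneg (by positivity : (0:ℝ) ≤ 1 / x)]
  simp [hΦ]

/-- The limsup along a filter. -/
def pF (F : Filter ℝ) (f : Linf) : ℝ := limsup (av f) F

theorem pF_lt {F : Filter ℝ} {f : Linf} {c : ℝ} (h : pF F f < c) : ∀ᶠ x in F, av f x < c := by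
  obtain ⟨C, -, hC⟩ := av_bd f
  exact eventually_lt_of_limsup_lt h (isBoundedUnder_of ⟨C, fun x => (abs_le.1 (hC x)).2⟩)

theorem pF_le {F : Filter ℝ} [F.NeBot] {f : Linf} {c : ℝ} (h : ∀ᶠ x in F, av f x ≤ c) :
    pF F f ≤ c := by
  obtain ⟨C, -, hC⟩ := av_bd f
  refine limsup_le_of_le ?_ h
  exact (isBoundedUnder_of ⟨-C, fun x => (abs_le.1 (hC x)).1⟩ :
    IsBoundedUnder (· ≥ ·) F (av f)).isCoboundedUnder_le

theorem pF_mono {F G : Filter ℝ} [F.NeBot] (h : F ≤ G) (f : Linf) : pF F f ≤ pF G f :=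
  le_of_forall_gt_imp_ge_of_dense fun _ hc => pF_le (((pF_lt hc).filter_mono h).mono fun _ h => h.le)

theorem pF_add {F : Filter ℝ} [F.NeBot] (f g : Linf) : pF F (f + g) ≤ pF F f + pF F g := by
  refine le_of_forall_pos_le_add fun ε hε => pF_le ?_
  filter_upwards [pF_lt (show pF F f < pF F f + ε / 2 by linarith),
    pF_lt (show pF F g < pF F g + ε / 2 by linarith)] with x h1 h2
  rw [av_add]; linarith

theorem pF_smul_le {F : Filter ℝ} [F.NeBot] {c : ℝ} (hc : 0 < c) (f : Linf) :
    pF F (c • f) ≤ c * pF F f := by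
  refine le_of_forall_pos_le_add fun ε hε => pF_le ?_
  filter_upwards [pF_lt (show pF F f < pF F f + ε / c by have : 0 < ε / c := by positivity
                                                         linarith)] with x h1
  rw [av_smul]
  have := mul_le_mul_of_nonneg_left h1.le hc.le
  rwa [mul_add, mul_div_cancel₀ _ hc.ne'] at this

theorem pF_smul {F : Filter ℝ} [F.NeBot] {c : ℝ} (hc : 0 < c) (f : Linf) :
    pF F (c • f) = c * pF F f := by
  refine le_antisymm (pF_smul_le hc f) ?_
  have := pF_smul_le (F := F) (inv_pos.2 hc) (c • f)
  rw [smul_smul, inv_mul_cancel₀ hc.ne', one_smul] at this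
  rwa [← le_inv_mul_iff₀ hc]

theorem pF_of_tendsto {F : Filter ℝ} [F.NeBot] {f : Linf} {l : ℝ} (h : Tendsto (av f) F (nhds l)) :
    pF F f = l := h.limsup_eq

theorem pF_const {F : Filter ℝ} [F.NeBot] (hF : F ≤ atTop) (c : ℝ) : pF F (c • oneL) = c := by
  apply pF_of_tendsto
  have := (tendsto_one.mono_left hF).const_mul c
  rw [mul_one] at this
  exact this.congr fun x => (av_smul c oneL x).symm

theorem pF_zero {F : Filter ℝ} [F.NeBot] : pF F 0 = 0 := by
  apply pF_of_tendsto
  have : av 0 = fun _ => 0 := by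
    funext x
    have := av_smul 0 0 x
    simpa using this
  rw [this]; exact tendsto_const_nhds

theorem pF_sub_self {F : Filter ℝ} [F.NeBot] (hF : F ≤ atTop) (f : Linf) :
    pF F (f - pF F f • oneL) ≤ 0 := by
  have := pF_add (F := F) f (-(pF F f) • oneL)
  rw [pF_const hF, neg_smul, ← sub_eq_add_neg] at this
  linarith

theorem mem_Mcl {F : Filter ℝ} [F.NeBot] (hF : F ≤ atTop) {φ : Linf →ₗ[ℝ] ℝ}
    (h : ∀ f, φ f ≤ pF F f) : φ ∈ Mcl := fun f => (h f).trans (pF_mono hF f)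

theorem splitting {ψ : Linf →ₗ[ℝ] ℝ} (hψ : ψ ∈ Set.extremePoints ℝ Mcl) {F G : Filter ℝ}
    [F.NeBot] [G.NeBot] (hF : F ≤ atTop) (hG : G ≤ atTop)
    (h : ∀ f, ψ f ≤ max (pF F f) (pF G f)) : (∀ f, ψ f ≤ pF F f) ∨ (∀ f, ψ f ≤ pF G f) := by
  let D : (Linf × Linf) →ₗ.[ℝ] ℝ :=
    ⟨LinearMap.range (LinearMap.prod LinearMap.id LinearMap.id : Linf →ₗ[ℝ] Linf × Linf),
      (ψ.comp (LinearMap.fst ℝ Linf Linf)).comp (Submodule.subtype _)⟩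
  obtain ⟨Ψ, h1, h2⟩ := exists_extension_of_le_sublinear D
    (fun z => max (pF F z.1) (pF G z.2))
    (fun c hc z => by
      simp only [Prod.smul_fst, Prod.smul_snd, pF_smul hc]
      rw [mul_max_of_nonneg _ _ hc.le])
    (fun z w => by
      refine max_le ?_ ?_
      · exact (pF_add _ _).trans (add_le_add (le_max_left _ _) (le_max_left _ _))
      · exact (pF_add _ _).trans (add_le_add (le_max_right _ _) (le_max_right _ _)))
    (by
      rintro ⟨_, f, rfl⟩
      exact h f)
  have hd : ∀ f, Ψ (f, 0) + Ψ (0, f) = ψ f := fun f => by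
    rw [← map_add]
    have : Ψ (f, f) = ψ f := h1 ⟨(f, f), ⟨f, rfl⟩⟩
    simpa using this
  set Ψ1 : Linf →ₗ[ℝ] ℝ := Ψ.comp (LinearMap.inl ℝ Linf Linf) with hΨ1
  set Ψ2 : Linf →ₗ[ℝ] ℝ := Ψ.comp (LinearMap.inr ℝ Linf Linf) with hΨ2
  have hd' : ∀ f, Ψ1 f + Ψ2 f = ψ f := hd
  set t := Ψ1 oneL with ht
  set s := Ψ2 oneL with hs
  have b1 : ∀ f, Ψ1 f ≤ t * pF F f := fun f => by
    have := h2 (f - pF F f • oneL, 0)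
    have h3 : Ψ1 (f - pF F f • oneL) ≤ 0 :=
      this.trans (max_le (pF_sub_self hF f) pF_zero.le)
    rw [map_sub, map_smul, smul_eq_mul] at h3
    linarith
  have b2 : ∀ f, Ψ2 f ≤ s * pF G f := fun f => by
    have := h2 (0, f - pF G f • oneL)
    have h3 : Ψ2 (f - pF G f • oneL) ≤ 0 :=
      this.trans (max_le pF_zero.le (pF_sub_self hG f))
    rw [map_sub, map_smul, smul_eq_mul] at h3
    linarith
  have ht0 : 0 ≤ t := by
    have := h2 ((-1 : ℝ) • oneL, 0)
    simp only [pF_const hF, pF_zero] at this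
    have h3 : Ψ1 ((-1 : ℝ) • oneL) ≤ 0 := this.trans (by norm_num)
    rw [map_smul, smul_eq_mul] at h3
    linarith
  have hs0 : 0 ≤ s := by
    have := h2 (0, (-1 : ℝ) • oneL)
    simp only [pF_const hG, pF_zero] at this
    have h3 : Ψ2 ((-1 : ℝ) • oneL) ≤ 0 := this.trans (by norm_num)
    rw [map_smul, smul_eq_mul] at h3
    linarith
  have hψ1 : ψ oneL = 1 := by
    have a1 := h ((1:ℝ) • oneL)
    have a2 := h ((-1:ℝ) • oneL)
    rw [pF_const hF, pF_const hG, max_self, map_smul, smul_eq_mul] at a1 a2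
    linarith
  have hts : t + s = 1 := (hd' oneL).trans hψ1
  rcases ht0.eq_or_lt with h0 | htp
  · right
    intro f
    have e1 := b1 f
    have e2 := b2 f
    have e3 := hd' f
    have : s = 1 := by linarith
    rw [this] at e2
    rw [← h0] at e1
    linarith
  rcases hs0.eq_or_lt with h0 | hsp
  · left
    intro f
    have e1 := b1 f
    have e2 := b2 f
    have e3 := hd' f
    have : t = 1 := by linarith
    rw [this] at e1
    rw [← h0] at e2
    linarith
  left
  have c1 : ∀ f, (t⁻¹ • Ψ1) f ≤ pF F f := fun f => by
    rw [LinearMap.smul_apply, smul_eq_mul, inv_mul_le_iff₀ htp]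
    exact b1 f
  have c2 : ∀ f, (s⁻¹ • Ψ2) f ≤ pF G f := fun f => by
    rw [LinearMap.smul_apply, smul_eq_mul, inv_mul_le_iff₀ hsp]
    exact b2 f
  have := hψ.2 (mem_Mcl hF c1) (mem_Mcl hG c2) ⟨t, s, htp, hsp, hts, by
    rw [smul_smul, smul_smul, mul_inv_cancel₀ htp.ne', mul_inv_cancel₀ hsp.ne', one_smul, one_smul]
    ext f
    exact hd' f⟩
  rw [← this]
  exact c1

/-- Sets that carry the functional. -/
def Good (ψ : Linf →ₗ[ℝ] ℝ) (E : Set ℝ) : Prop :=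
  ∀ f c, (∀ᶠ x in atTop, x ∈ E → av f x ≤ c) → ψ f ≤ c

theorem good_iff {ψ : Linf →ₗ[ℝ] ℝ} {E : Set ℝ} [(atTop ⊓ Filter.principal E).NeBot] :
    Good ψ E ↔ ∀ f, ψ f ≤ pF (atTop ⊓ Filter.principal E) f := by
  constructor
  · intro h f
    refine le_of_forall_gt_imp_ge_of_dense fun c hc => h f c ?_
    have := pF_lt hc
    rw [eventually_inf_principal] at this
    exact this.mono fun x hx h => (hx h).le
  · intro h f c hc
    refine (h f).trans (pF_le ?_)
    rwa [eventually_inf_principal]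

theorem good_of_bot {ψ : Linf →ₗ[ℝ] ℝ} {E E' : Set ℝ} (h : Good ψ (E ∪ E'))
    (hE : atTop ⊓ Filter.principal E = ⊥) : Good ψ E' := by
  intro f c hc
  have hE' : ∀ᶠ x in atTop ⊓ Filter.principal E, False := by rw [hE]; exact eventually_bot
  rw [eventually_inf_principal] at hE'
  refine h f c ?_
  filter_upwards [hc, hE'] with x h1 h2 h3
  exact h1 (h3.resolve_left h2)

theorem good_union {ψ : Linf →ₗ[ℝ] ℝ} (hψ : ψ ∈ Set.extremePoints ℝ Mcl) {E E' : Set ℝ}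
    (h : Good ψ (E ∪ E')) : Good ψ E ∨ Good ψ E' := by
  by_cases hE : atTop ⊓ Filter.principal E = ⊥
  · exact Or.inr (good_of_bot h hE)
  by_cases hE' : atTop ⊓ Filter.principal E' = ⊥
  · rw [Set.union_comm] at h
    exact Or.inl (good_of_bot h hE')
  have : (atTop ⊓ Filter.principal E).NeBot := ⟨hE⟩
  have : (atTop ⊓ Filter.principal E').NeBot := ⟨hE'⟩
  rw [good_iff, good_iff]
  refine splitting hψ inf_le_left inf_le_left fun f => ?_
  refine le_of_forall_gt_imp_ge_of_dense fun c hc => h f c ?_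
  have h1 := pF_lt ((le_max_left _ _).trans_lt hc)
  have h2 := pF_lt ((le_max_right _ _).trans_lt hc)
  rw [eventually_inf_principal] at h1 h2
  filter_upwards [h1, h2] with x a b hx
  exact hx.elim (fun h => (a h).le) (fun h => (b h).le)

theorem Good.mono {ψ : Linf →ₗ[ℝ] ℝ} {E E' : Set ℝ} (h : Good ψ E) (hs : E ⊆ E') : Good ψ E' :=
  fun f c hc => h f c (hc.mono fun _ hx hE => hx (hs hE))

theorem not_good {ψ : Linf →ₗ[ℝ] ℝ} {E : Set ℝ} (h : ∀ᶠ x in atTop, x ∉ E) : ¬ Good ψ E := by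
  intro hg
  have := hg 0 (-1) (h.mono fun x hx hE => absurd hE hx)
  rw [map_zero] at this
  linarith

theorem exists_lim (U : Ultrafilter ℝ) (f : Linf) : ∃ l, Tendsto (av f) U (nhds l) := by
  obtain ⟨C, -, hC⟩ := av_bd f
  obtain ⟨l, -, hl⟩ := (isCompact_Icc (a := -C) (b := C)).ultrafilter_le_nhds (U.map (av f))
    (le_principal_iff.2 (Ultrafilter.mem_coe.2 (Ultrafilter.mem_map.2
      (Filter.mem_of_superset Filter.univ_mem fun x _ => abs_le.1 (hC x)))))
  exact ⟨l, hl⟩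

theorem extreme_imp {ψ : Linf →ₗ[ℝ] ℝ} (hψ : ψ ∈ Set.extremePoints ℝ Mcl) :
    ∃ U : Ultrafilter ℝ, (U : Filter ℝ) ≤ atTop ∧ ∀ f, Tendsto (av f) U (nhds (ψ f)) := by
  have huniv : Good ψ Set.univ := by
    intro f c hc
    exact (hψ.1 f).trans (pF_le (F := atTop) (hc.mono fun x hx => hx trivial))
  let F : Filter ℝ :=
    { sets := {E | ¬ Good ψ Eᶜ}
      univ_sets := by
        simp only [Set.mem_ofPred_eq, Set.compl_univ]
        exact not_good (Eventually.of_forall fun x hx => hx)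
      sets_of_superset := fun {A B} hA hAB hB => hA (hB.mono (Set.compl_subset_compl.2 hAB))
      inter_sets := fun {A B} hA hB hAB => by
        rw [Set.compl_inter] at hAB
        exact (good_union hψ hAB).elim hA hB }
  have hFm : ∀ E, E ∈ F ↔ ¬ Good ψ Eᶜ := fun E => Iff.rfl
  have hne : F.NeBot := by
    refine ⟨fun h => ?_⟩
    have : (∅ : Set ℝ) ∈ F := by rw [h]; exact mem_bot
    rw [hFm, Set.compl_empty] at this
    exact this huniv
  have hFt : F ≤ atTop := fun E hE => by
    rw [hFm]
    refine not_good ?_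
    filter_upwards [hE] with x hx h
    exact h hx
  let U := Ultrafilter.of F
  have hUF : (U : Filter ℝ) ≤ F := Ultrafilter.of_le F
  refine ⟨U, hUF.trans hFt, fun f => ?_⟩
  have hgood : ∀ E ∈ U, Good ψ E := fun E hE => by
    by_contra hn
    have : Eᶜ ∈ F := by rw [hFm, compl_compl]; exact hn
    exact (Ultrafilter.compl_mem_iff_notMem.1 (hUF this)) hE
  have key : ∀ f l, Tendsto (av f) U (nhds l) → ψ f ≤ l := fun f l hl => by
    refine le_of_forall_gt_imp_ge_of_dense fun c hc => ?_
    exact hgood {x | av f x < c} (hl.eventually (gt_mem_nhds hc)) f c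
      (Eventually.of_forall fun x hx => le_of_lt hx)
  obtain ⟨l, hl⟩ := exists_lim U f
  have h1 := key f l hl
  have h2 := key (-f) (-l) (by
    refine hl.neg.congr fun x => ?_
    exact (av_neg f x).symm)
  rw [map_neg] at h2
  have : ψ f = l := by linarith
  rwa [this]

theorem mcl_nonneg {φ : Linf →ₗ[ℝ] ℝ} (h : φ ∈ Mcl) {f : Linf} (hf : ∀ x, 1 ≤ x → 0 ≤ av f x) :
    0 ≤ φ f := by
  have h1 : φ (-f) ≤ 0 := (h (-f)).trans (pF_le (F := atTop) (by
    filter_upwards [eventually_ge_atTop 1] with x hx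
    rw [av_neg]
    linarith [hf x hx]))
  rw [map_neg] at h1
  linarith

theorem mcl_one {φ : Linf →ₗ[ℝ] ℝ} (h : φ ∈ Mcl) : φ oneL = 1 := by
  have a1 : φ ((1:ℝ) • oneL) ≤ _ := (h _).trans (pF_const (F := atTop) le_rfl 1).le
  have a2 : φ ((-1:ℝ) • oneL) ≤ _ := (h _).trans (pF_const (F := atTop) le_rfl (-1)).le
  rw [map_smul, smul_eq_mul] at a1 a2
  linarith

theorem imp_extreme {ψ : Linf →ₗ[ℝ] ℝ} {U : Ultrafilter ℝ} (hU : (U : Filter ℝ) ≤ atTop)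
    (h : ∀ f, Tendsto (av f) U (nhds (ψ f))) : ψ ∈ Set.extremePoints ℝ Mcl := by
  refine ⟨mem_Mcl hU fun f => (pF_of_tendsto (h f)).ge, ?_⟩
  rintro φ h1 φ' h2 ⟨a, b, ha, hb, hab, hs⟩
  have hs' : ∀ f, a * φ f + b * φ' f = ψ f := fun f => by rw [← hs]; rfl
  ext f
  set f' := f - ψ f • oneL with hf'
  have hψ1 : ψ oneL = 1 := by rw [← hs', mcl_one h1, mcl_one h2]; linarith
  have hψf' : ψ f' = 0 := by rw [hf', map_sub, map_smul, hψ1]; simp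
  obtain ⟨g, hg⟩ := exists_abs f'
  have hψg : ψ g = 0 := by
    have t1 := (h f').abs
    rw [hψf', abs_zero] at t1
    refine tendsto_nhds_unique (h g) (t1.congr' ?_)
    filter_upwards [hU (eventually_ge_atTop 1)] with x hx
    exact (hg x hx).symm
  have g1 : 0 ≤ φ g := mcl_nonneg h1 fun x hx => by rw [hg x hx]; positivity
  have g2 : 0 ≤ φ' g := mcl_nonneg h2 fun x hx => by rw [hg x hx]; positivity
  have g3 : φ g = 0 := by
    have := hs' g
    rw [hψg] at this
    nlinarith [mul_nonneg ha.le g1, mul_nonneg hb.le g2]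
  have k1 : 0 ≤ φ (g + f') := mcl_nonneg h1 fun x hx => by
    rw [av_add, hg x hx]; linarith [neg_abs_le (av f' x)]
  have k2 : 0 ≤ φ (g + -f') := mcl_nonneg h1 fun x hx => by
    rw [av_add, av_neg, hg x hx]; linarith [le_abs_self (av f' x)]
  rw [map_add, g3] at k1 k2
  rw [map_neg] at k2
  have k3 : φ f' = 0 := by linarith
  rw [hf', map_sub, map_smul, mcl_one h1, smul_eq_mul] at k3
  linarith

theorem unbdd_iff (U : Ultrafilter ℝ) : UnbddUF U ↔ (U : Filter ℝ) ≤ atTop := by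
  constructor
  · rintro ⟨h1, h2⟩
    have hM : ∀ M : ℝ, Set.Ioi M ∈ U := fun M => by
      by_contra hn
      have h3 : (Set.Ioi M)ᶜ ∈ U := Ultrafilter.compl_mem_iff_notMem.2 hn
      refine h2 (Set.Ici 1 ∩ (Set.Ioi M)ᶜ) Set.inter_subset_left ?_ (Filter.inter_mem h1 h3)
      refine (Metric.isBounded_Icc 1 M).subset ?_
      rintro x ⟨hx, hx'⟩
      exact ⟨hx, not_lt.1 hx'⟩
    intro E hE
    obtain ⟨M, hE⟩ := mem_atTop_sets.1 hE
    exact Filter.mem_of_superset (hM M) fun x hx => hE x (le_of_lt hx)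
  · intro h
    refine ⟨h (Ici_mem_atTop 1), fun B _ hB hBU => ?_⟩
    obtain ⟨M, hM⟩ := hB.bddAbove
    have h3 : Set.Ioi M ∈ U := h (Ioi_mem_atTop M)
    obtain ⟨x, hx1, hx2⟩ := U.nonempty_of_mem (Filter.inter_mem hBU h3)
    exact absurd (hM hx1) (not_le.2 hx2)

/-- A linear functional `ψ` on `L^∞[1,∞)` is an extreme point of `ℳ`
iff `ψ = ψ^𝒰` for some ultrafilter `𝒰` on `[1,∞)` containing no bounded set;
that is, `𝓜̃ = ex(ℳ)`. -/
theorem stmt12 (ψ : Linf →ₗ[ℝ] ℝ) :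
    ψ ∈ Set.extremePoints ℝ Mcl ↔
      ∃ 𝒰 : Ultrafilter ℝ, UnbddUF 𝒰 ∧ ∀ f : Linf,
        ψ f = limUnder (𝒰 : Filter ℝ) (fun x : ℝ => (1 / x) * ∫ t in Set.Icc (1:ℝ) x, f t) := by
  constructor
  · intro h
    obtain ⟨U, hU, hl⟩ := extreme_imp h
    exact ⟨U, (unbdd_iff U).2 hU, fun f => (hl f).limUnder_eq.symm⟩
  · rintro ⟨U, hU, hl⟩
    refine imp_extreme ((unbdd_iff U).1 hU) fun f => ?_
    rw [hl f]
    exact tendsto_nhds_limUnder (exists_lim U f)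
end
end

section
/- A linear functional φ : ℓ∞ → ℝ is an extreme point of the convex set 𝒞 if and only if φ = φ^𝒰 for some free ultrafilter 𝒰 on ℕ. That is, the set of extreme points of 𝒞 is exactly 𝒞̃. -/
open Filter

noncomputable section

/-- `ℓ∞`, the bounded (continuous, for the discrete topology) functions `ℕ → ℝ`. -/
abbrev linf : Type := BoundedContinuousFunction ℕ ℝ

/-- `C̄(f) = limsup_{n→∞} (1/n) ∑_{i=1}^n f(i)`. -/
def Cbar (f : linf) : ℝ :=
  limsup (fun n : ℕ => (1 / (n : ℝ)) * ∑ i ∈ Finset.Icc 1 n, f i) atTop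

/-- The class `𝒞` of linear functionals `φ` on `ℓ∞` with `φ(f) ≤ C̄(f)` for all `f`. -/
def Ccl : Set (linf →ₗ[ℝ] ℝ) := {φ | ∀ f : linf, φ f ≤ Cbar f}

/-- Cesàro averages. -/
def avg (f : linf) (n : ℕ) : ℝ := (1 / (n : ℝ)) * ∑ i ∈ Finset.Icc 1 n, f i

lemma avg_add (f g : linf) (n : ℕ) : avg (f + g) n = avg f n + avg g n := by
  simp [avg, Finset.sum_add_distrib, mul_add]

lemma avg_smul (c : ℝ) (f : linf) (n : ℕ) : avg (c • f) n = c * avg f n := by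
  simp only [avg, BoundedContinuousFunction.coe_smul, smul_eq_mul, ← Finset.mul_sum]
  ring

lemma avg_sub (f g : linf) (n : ℕ) : avg (f - g) n = avg f n - avg g n := by
  simp [avg, mul_sub]

lemma avg_one (n : ℕ) (hn : 1 ≤ n) : avg 1 n = 1 := by
  have : (n : ℝ) ≠ 0 := by positivity
  simp [avg, this]

lemma mul_avg (f : linf) (n : ℕ) : (n : ℝ) * avg f n = ∑ i ∈ Finset.Icc 1 n, f i := by
  rcases Nat.eq_zero_or_pos n with rfl | hn
  · simp
  · have : (n : ℝ) ≠ 0 := by positivity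
    simp only [avg]
    field_simp

lemma succ_mul_avg (f : linf) (n : ℕ) :
    ((n : ℝ) + 1) * avg f (n + 1) = n * avg f n + f (n + 1) := by
  have h := mul_avg f (n + 1)
  rw [Finset.sum_Icc_succ_top (by omega), ← mul_avg f n] at h
  exact_mod_cast h

lemma abs_avg_le (f : linf) (n : ℕ) : |avg f n| ≤ ‖f‖ := by
  rcases Nat.eq_zero_or_pos n with rfl | hn
  · simp [avg]
  · have h0 : (0 : ℝ) < n := by positivity
    have h1 : |∑ i ∈ Finset.Icc 1 n, f i| ≤ n * ‖f‖ := by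
      refine (Finset.abs_sum_le_sum_abs _ _).trans ?_
      refine (Finset.sum_le_card_nsmul _ _ ‖f‖ fun i _ => f.norm_coe_le_norm i).trans ?_
      simp
    rw [← mul_avg, abs_mul, abs_of_pos h0] at h1
    exact le_of_mul_le_mul_left h1 h0

/-- Product on `ℓ∞` transported from the algebra of Cesàro averages. -/
def star' (f g : linf) : linf :=
  BoundedContinuousFunction.ofNormedAddCommGroupDiscrete
    (fun n => avg f n * (g n - avg g (n - 1)) + f n * avg g (n - 1)) (3 * (‖f‖ * ‖g‖)) (by
      intro n
      have h1 : ‖avg f n‖ ≤ ‖f‖ := abs_avg_le f n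
      have h2 : ‖avg g (n - 1)‖ ≤ ‖g‖ := abs_avg_le g (n - 1)
      have h3 := f.norm_coe_le_norm n
      have h4 := g.norm_coe_le_norm n
      calc _ ≤ ‖avg f n * (g n - avg g (n - 1))‖ + ‖f n * avg g (n - 1)‖ := norm_add_le _ _
        _ ≤ ‖f‖ * (‖g‖ + ‖g‖) + ‖f‖ * ‖g‖ := by
          rw [norm_mul, norm_mul]
          gcongr
          exact (norm_sub_le _ _).trans (add_le_add h4 h2)
        _ = _ := by ring)

lemma star'_apply (f g : linf) (n : ℕ) :
    star' f g n = avg f n * (g n - avg g (n - 1)) + f n * avg g (n - 1) := rfl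

lemma avg_star (f g : linf) (n : ℕ) : avg (star' f g) n = avg f n * avg g n := by
  induction n with
  | zero => simp [avg]
  | succ n ih =>
    have h := succ_mul_avg (star' f g) n
    have hf := succ_mul_avg f n
    have hg := succ_mul_avg g n
    rw [ih, star'_apply, Nat.add_sub_cancel] at h
    have h0 : ((n : ℝ) + 1) ≠ 0 := by positivity
    apply mul_left_cancel₀ h0
    rw [h]
    linear_combination (-avg g n) * hf - avg f (n + 1) * hg

lemma mem_Ccl_iff (φ : linf →ₗ[ℝ] ℝ) :
    φ ∈ Ccl ↔ ∀ f c, (∀ᶠ n in atTop, avg f n ≤ c) → φ f ≤ c := by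
  have hb : ∀ f : linf, IsBoundedUnder (· ≤ ·) atTop (avg f) := fun f =>
    ⟨‖f‖, by simpa using ⟨0, fun n _ => (abs_le.1 (abs_avg_le f n)).2⟩⟩
  have hc : ∀ f : linf, IsCoboundedUnder (· ≤ ·) atTop (avg f) := fun f =>
    IsBoundedUnder.isCoboundedUnder_le
      ⟨-‖f‖, by simpa using ⟨0, fun n _ => (abs_le.1 (abs_avg_le f n)).1⟩⟩
  constructor
  · intro h f c hf
    exact (h f).trans (limsup_le_of_le (hc f) hf)
  · intro h f
    refine le_of_forall_pos_le_add fun ε hε => h f _ ?_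
    have : limsup (avg f) atTop < Cbar f + ε := by
      change Cbar f < _
      linarith
    exact (eventually_lt_of_limsup_lt this (hb f)).mono fun n hn => hn.le

section
variable {φ : linf →ₗ[ℝ] ℝ} (hφ : φ ∈ Ccl)
include hφ

lemma Ccl_le {f : linf} {c : ℝ} (h : ∀ᶠ n in atTop, avg f n ≤ c) : φ f ≤ c :=
  (mem_Ccl_iff φ).1 hφ f c h

lemma Ccl_ge {f : linf} {c : ℝ} (h : ∀ᶠ n in atTop, c ≤ avg f n) : c ≤ φ f := by
  have := Ccl_le hφ (f := (-1 : ℝ) • f) (c := -c)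
    (h.mono fun n hn => by rw [avg_smul]; linarith)
  rw [map_smul, smul_eq_mul] at this
  linarith

lemma Ccl_mono {f g : linf} (h : ∀ n, 1 ≤ n → avg f n ≤ avg g n) : φ f ≤ φ g := by
  have := Ccl_ge hφ (f := g - f) (c := 0)
    ((eventually_ge_atTop 1).mono fun n hn => by rw [avg_sub]; linarith [h n hn])
  rw [map_sub] at this
  linarith

lemma Ccl_congr {f g : linf} (h : ∀ n, 1 ≤ n → avg f n = avg g n) : φ f = φ g :=
  le_antisymm (Ccl_mono hφ fun n hn => (h n hn).le) (Ccl_mono hφ fun n hn => (h n hn).ge)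

lemma Ccl_one : φ 1 = 1 :=
  le_antisymm (Ccl_le hφ ((eventually_ge_atTop 1).mono fun n hn => (avg_one n hn).le))
    (Ccl_ge hφ ((eventually_ge_atTop 1).mono fun n hn => (avg_one n hn).ge))

lemma star_mid (hext : φ ∈ Set.extremePoints ℝ Ccl) (f h : linf)
    (hh : ∀ n, 1 ≤ n → 1/4 ≤ avg h n ∧ avg h n ≤ 3/4) :
    φ (star' f h) = φ f * φ h := by
  have ht1 : 1/4 ≤ φ h := Ccl_ge hφ ((eventually_ge_atTop 1).mono fun n hn => (hh n hn).1)
  have ht2 : φ h ≤ 3/4 := Ccl_le hφ ((eventually_ge_atTop 1).mono fun n hn => (hh n hn).2)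
  let ψ : linf →ₗ[ℝ] ℝ :=
    { toFun := fun f => φ (star' f h)
      map_add' := fun f g => by
        rw [← map_add]
        exact Ccl_congr hφ fun n _ => by simp only [avg_star, avg_add]; ring
      map_smul' := fun c f => by
        rw [RingHom.id_apply, ← map_smul]
        exact Ccl_congr hφ fun n _ => by simp only [avg_star, avg_smul]; ring }
  have hψ : ∀ f, ψ f = φ (star' f h) := fun _ => rfl
  have key : ∀ f c, (∀ᶠ n in atTop, avg f n ≤ c) → ψ f ≤ c * φ h ∧ φ f - ψ f ≤ c * (1 - φ h) := by
    intro f c hf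
    constructor
    · have := Ccl_ge hφ (f := c • h - star' f h) (c := 0) (by
        filter_upwards [hf, eventually_ge_atTop 1] with n hn h1
        rw [avg_sub, avg_smul, avg_star]
        nlinarith [hh n h1])
      rw [map_sub, map_smul, smul_eq_mul] at this
      rw [hψ]; linarith
    · have := Ccl_ge hφ (f := c • (1 - h) - (f - star' f h)) (c := 0) (by
        filter_upwards [hf, eventually_ge_atTop 1] with n hn h1
        rw [avg_sub, avg_smul, avg_sub, avg_sub, avg_star, avg_one n h1]
        nlinarith [hh n h1])
      rw [map_sub, map_smul, map_sub, map_sub, smul_eq_mul, Ccl_one hφ] at this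
      rw [hψ]; linarith
  have hp : 0 < φ h := by linarith
  have hq : 0 < 1 - φ h := by linarith
  have h1 : (φ h)⁻¹ • ψ ∈ Ccl := (mem_Ccl_iff _).2 fun f c hf => by
    have := (key f c hf).1
    rw [LinearMap.smul_apply, smul_eq_mul, inv_mul_le_iff₀ hp]; linarith
  have h2 : (1 - φ h)⁻¹ • (φ - ψ) ∈ Ccl := (mem_Ccl_iff _).2 fun f c hf => by
    have := (key f c hf).2
    rw [LinearMap.smul_apply, smul_eq_mul, inv_mul_le_iff₀ hq, LinearMap.sub_apply]; linarith
  have h3 : (φ h)⁻¹ • ψ = φ := by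
    refine (mem_extremePoints.1 hext).2 _ h1 _ h2 ⟨φ h, 1 - φ h, hp, hq, by ring, ?_⟩ |>.1
    rw [smul_smul, smul_smul, mul_inv_cancel₀ hp.ne', mul_inv_cancel₀ hq.ne']
    simp
  have h4 : (φ h)⁻¹ * ψ f = φ f := by
    have := congrArg (fun χ : linf →ₗ[ℝ] ℝ => χ f) h3
    simpa using this
  rw [← hψ, ← h4]
  field_simp

lemma star_mul (hext : φ ∈ Set.extremePoints ℝ Ccl) (f h : linf) :
    φ (star' f h) = φ f * φ h := by
  set d : ℝ := (4 * (‖h‖ + 1))⁻¹ with hd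
  have hn0 := norm_nonneg h
  have hd0 : 0 < d := by positivity
  have hdn : d * ‖h‖ ≤ 1/4 := by
    rw [hd, inv_mul_le_iff₀ (by positivity)]; linarith
  have := star_mid hφ hext f ((1/2 : ℝ) • 1 + d • h) (fun n hn => by
    rw [avg_add, avg_smul, avg_smul, avg_one n hn]
    have := abs_le.1 (abs_avg_le h n)
    constructor <;> nlinarith)
  rw [Ccl_congr hφ (g := (1/2 : ℝ) • f + d • star' f h) (fun n hn => by
    simp only [avg_star, avg_add, avg_smul, avg_one n hn]; ring)] at this
  simp only [map_add, map_smul, smul_eq_mul, Ccl_one hφ] at this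
  apply mul_left_cancel₀ hd0.ne'
  linarith

end

lemma avg_sq (f : linf) (c : ℝ) (n : ℕ) (hn : 1 ≤ n) :
    avg (star' (f - c • 1) (f - c • 1)) n = (avg f n - c) ^ 2 := by
  rw [avg_star, avg_sub, avg_smul, avg_one n hn]; ring

lemma exists_ultra {φ : linf →ₗ[ℝ] ℝ} (hext : φ ∈ Set.extremePoints ℝ Ccl) :
    ∃ 𝒰 : Ultrafilter ℕ, (𝒰 : Filter ℕ) ≤ atTop ∧
      ∀ f : linf, Tendsto (avg f) 𝒰 (nhds (φ f)) := by
  have hφ : φ ∈ Ccl := hext.1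
  let Z := {h : linf // φ h = 0 ∧ ∀ n, 0 ≤ avg h n}
  let S : Z × ℕ → Set ℕ := fun p => {n | p.2 ≤ n ∧ avg p.1.1 n < 1}
  have hdir : Directed (· ≥ ·) (fun p => 𝓟 (S p)) := by
    rintro ⟨⟨h1, a1, b1⟩, N1⟩ ⟨⟨h2, a2, b2⟩, N2⟩
    refine ⟨⟨⟨h1 + h2, by rw [map_add, a1, a2, add_zero],
      fun n => by rw [avg_add]; exact add_nonneg (b1 n) (b2 n)⟩, max N1 N2⟩, ?_, ?_⟩
    · refine principal_mono.2 fun n hn => ?_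
      have h := hn.2
      simp only [avg_add] at h
      exact ⟨(le_max_left _ _).trans hn.1, by have := b2 n; show avg h1 n < 1; linarith⟩
    · refine principal_mono.2 fun n hn => ?_
      have h := hn.2
      simp only [avg_add] at h
      exact ⟨(le_max_right _ _).trans hn.1, by have := b1 n; show avg h2 n < 1; linarith⟩
  have z0 : Z := ⟨0, map_zero φ, fun n => by simp [avg]⟩
  have : Nonempty (Z × ℕ) := ⟨(z0, 0)⟩
  have : NeBot (⨅ p, 𝓟 (S p)) := by
    refine iInf_neBot_of_directed' hdir ?_
    rintro ⟨⟨h, a, b⟩, N⟩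
    rw [principal_neBot_iff]
    by_contra hne
    rw [Set.not_nonempty_iff_eq_empty] at hne
    have : (1 : ℝ) ≤ φ h := Ccl_ge hφ ((eventually_ge_atTop N).mono fun n hn => by
      by_contra hlt
      have : n ∈ (∅ : Set ℕ) := hne ▸ (⟨hn, not_le.1 hlt⟩ : N ≤ n ∧ avg h n < 1)
      exact this)
    linarith
  have hmem : ∀ p, S p ∈ (Ultrafilter.of (⨅ p, 𝓟 (S p)) : Filter ℕ) := fun p =>
    Ultrafilter.of_le _ (mem_iInf_of_mem p (mem_principal_self _))
  refine ⟨Ultrafilter.of (⨅ p, 𝓟 (S p)), ?_, fun f => ?_⟩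
  · intro s hs
    obtain ⟨N, hN⟩ := mem_atTop_sets.1 hs
    exact mem_of_superset (hmem (z0, N)) fun n hn => hN n hn.1
  · rw [Metric.tendsto_nhds]
    intro ε hε
    have hz : φ (star' (f - φ f • 1) (f - φ f • 1)) = 0 := by
      rw [star_mul hφ hext, map_sub, map_smul, Ccl_one hφ]; simp
    refine mem_of_superset (hmem (⟨(ε ^ 2)⁻¹ • star' (f - φ f • 1) (f - φ f • 1),
      by rw [map_smul, hz, smul_zero], fun n => ?_⟩, 1)) fun n hn => ?_
    · rw [avg_smul, avg_star]
      exact mul_nonneg (by positivity) (mul_self_nonneg _)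
    · have h := hn.2
      simp only [avg_smul] at h
      rw [avg_sq f _ n hn.1, inv_mul_lt_iff₀ (by positivity), mul_one] at h
      change |avg f n - φ f| < ε
      exact abs_lt_of_sq_lt_sq h hε.le

lemma exists_lim_s13 (𝒰 : Ultrafilter ℕ) (f : linf) : ∃ x, Tendsto (avg f) 𝒰 (nhds x) := by
  obtain ⟨x, -, hx⟩ := (isCompact_Icc (a := -‖f‖) (b := ‖f‖)).ultrafilter_le_nhds (𝒰.map (avg f))
    (by
      rw [le_principal_iff]
      rw [Ultrafilter.coe_map, mem_map]
      exact Eventually.of_forall (f := (𝒰 : Filter ℕ)) fun n => abs_le.1 (abs_avg_le f n))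
  exact ⟨x, hx⟩

lemma extreme_of_ultra {φ : linf →ₗ[ℝ] ℝ} (𝒰 : Ultrafilter ℕ) (hU : (𝒰 : Filter ℕ) ≤ atTop)
    (h : ∀ f : linf, Tendsto (avg f) 𝒰 (nhds (φ f))) : φ ∈ Set.extremePoints ℝ Ccl := by
  have hφ : φ ∈ Ccl := (mem_Ccl_iff φ).2 fun f c hf => le_of_tendsto (h f) (hU hf)
  have hq : ∀ f, φ (star' (f - φ f • 1) (f - φ f • 1)) = 0 := by
    intro f
    refine tendsto_nhds_unique (h _) ?_
    have h1 : Tendsto (fun n => (avg f n - φ f) ^ 2) 𝒰 (nhds ((φ f - φ f) ^ 2)) :=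
      ((h f).sub_const _).pow 2
    rw [sub_self, zero_pow two_ne_zero] at h1
    refine h1.congr' ?_
    filter_upwards [hU (eventually_ge_atTop 1)] with n hn
    exact (avg_sq f _ n hn).symm
  have main : ∀ φ₁ ∈ Ccl, ∀ φ₂ ∈ Ccl, ∀ a b : ℝ, 0 < a → 0 < b → a • φ₁ + b • φ₂ = φ → φ₁ = φ := by
    intro φ₁ h₁ φ₂ h₂ a b ha hb hab
    ext f
    set q := star' (f - φ f • 1) (f - φ f • 1) with hqd
    have hn : ∀ᶠ n in atTop, 0 ≤ avg q n := Eventually.of_forall fun n => by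
      rw [hqd, avg_star]; exact mul_self_nonneg _
    have p1 : 0 ≤ φ₁ q := Ccl_ge h₁ hn
    have p2 : 0 ≤ φ₂ q := Ccl_ge h₂ hn
    have p3 : a * φ₁ q + b * φ₂ q = 0 := by
      rw [← hq f, ← hqd]
      have := congrArg (fun χ : linf →ₗ[ℝ] ℝ => χ q) hab
      simpa using this
    have p4 : φ₁ q = 0 := by
      have := mul_nonneg hb.le p2
      have := mul_nonneg ha.le p1
      have h5 : a * φ₁ q = 0 := by linarith
      exact (mul_eq_zero.1 h5).resolve_left ha.ne'
    set s := φ₁ f - φ f with hs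
    have p5 := Ccl_mono h₁ (f := (2 * s) • (f - φ f • 1) - (s ^ 2) • 1) (g := q) (fun n hn => by
      rw [hqd, avg_sq f _ n hn]
      simp only [avg_sub, avg_smul, avg_one n hn]
      nlinarith [sq_nonneg (avg f n - φ f - s)])
    rw [p4] at p5
    simp only [map_sub, map_smul, smul_eq_mul, Ccl_one h₁, mul_one, ← hs] at p5
    have : s = 0 := by
      have : s ^ 2 ≤ 0 := by nlinarith
      exact pow_eq_zero_iff two_ne_zero |>.1 (le_antisymm this (sq_nonneg s))
    linarith
  refine mem_extremePoints.2 ⟨hφ, ?_⟩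
  rintro φ₁ h₁ φ₂ h₂ ⟨a, b, ha, hb, -, hab⟩
  exact ⟨main φ₁ h₁ φ₂ h₂ a b ha hb hab, main φ₂ h₂ φ₁ h₁ b a hb ha (by rw [add_comm]; exact hab)⟩

/-- A linear functional `φ` on `ℓ∞` is an extreme point of `𝒞` iff
`φ = φ^𝒰` for some free ultrafilter `𝒰` on `ℕ`; that is, `ex(𝒞) = 𝒞̃`. -/
theorem stmt13 (φ : linf →ₗ[ℝ] ℝ) :
    φ ∈ Set.extremePoints ℝ Ccl ↔
      ∃ 𝒰 : Ultrafilter ℕ, (𝒰 : Filter ℕ) ≤ Filter.cofinite ∧ ∀ f : linf,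
        φ f = limUnder (𝒰 : Filter ℕ)
          (fun n : ℕ => (1 / (n : ℝ)) * ∑ i ∈ Finset.Icc 1 n, f i) := by
  constructor
  · intro h
    obtain ⟨𝒰, hU, ht⟩ := exists_ultra h
    exact ⟨𝒰, by rw [Nat.cofinite_eq_atTop]; exact hU, fun f => (ht f).limUnder_eq.symm⟩
  · rintro ⟨𝒰, hU, h⟩
    rw [Nat.cofinite_eq_atTop] at hU
    refine extreme_of_ultra 𝒰 hU fun f => ?_
    rw [h f]
    exact tendsto_nhds_limUnder (exists_lim_s13 𝒰 f)
end
end
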